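/- arXiv:math/0508064 — 2 statements merged into one kernel-verified Lean document; each statement's English description precedes it below -/
import Mathlib

section
/- Fix an integer n ≥ 2 and let g ∈ ℚ[s, e] be the unique two-variable polynomial with g(X + Y, X·Y) = X^{n+1} + Y^{n+1}. In R = ℚ[x₁, x₂, x₃, x₄], set π₁₃ = Σ_{a+b=n, a,b≥0} x₁^a x₃^b and π₂₄ = Σ_{a+b=n, a,b≥0} x₂^a x₄^b, let u₁, u₂ ∈ R satisfy u₁·(x₁ + x₂ − x₃ − x₄) = g(x₁ + x₂, x₁x₂) − g(x₃ + x₄, x₁x₂) and u₂·(x₁x₂ − x₃x₄) = g(x₃ + x₄, x₁x₂) − g(x₃ + x₄, x₃x₄), and let a₁ ∈ R satisfy (x₁ − x₃)·(a₁ + u₂) = u₁ + x₁u₂ − π₂₄. Define P₀ = [[π₁₃, x₂ − x₄], [π₂₄, −x₁ + x₃]], P₁ = [[x₁ − x₃, x₂ − x₄], [π₂₄, −π₁₃]], Q₀ = [[u₁, x₁x₂ − x₃x₄], [u₂, −x₁ − x₂ + x₃ + x₄]], Q₁ = [[x₁ + x₂ − x₃ − x₄, x₁x₂ − x₃x₄],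 [u₂, −u₁]], U₀ = [[x₃ − x₂, 0], [a₁, 1]], and U₁ = [[x₃, −x₂], [−1, 1]]. Then U₁·P₀ = Q₀·U₀ and U₀·P₁ = Q₁·U₁; i.e., the pair (U₀, U₁) is a homomorphism of matrix factorizations from (P₀, P₁) to (Q₀, Q₁). -/
/-!
Both factorizations have the potential `x₁ⁿ⁺¹ + x₂ⁿ⁺¹ - x₃ⁿ⁺¹ - x₄ⁿ⁺¹`: for `(P₀, P₁)` because
`π₁₃ (x₁ - x₃)` and `π₂₄ (x₂ - x₄)` are differences of powers, for `(Q₀, Q₁)` because the two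
difference quotients `u₁` and `u₂` of `g` telescope. Together with the equation defining `a₁`, and
since `x₁ - x₃` can be cancelled, this equality of potentials determines `π₁₃` and `π₂₄` as linear
forms in `u₁`, `u₂`, `a₁`:
`π₁₃ = u₁ + x₂ u₂ + (x₂ - x₄) a₁` and `π₂₄ = u₁ + x₃ u₂ - (x₁ - x₃) a₁`.
After this substitution both matrix equations are polynomial identities.
-/

open MvPolynomial

theorem sum_antidiagonal_pow_mul_pow_mul_sub {A : Type*} [CommRing A] (n : ℕ) (x y : A) :
    (∑ p ∈ Finset.HasAntidiagonal.antidiagonal n, x ^ p.1 * y ^ p.2) * (x - y)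
      = x ^ (n + 1) - y ^ (n + 1) := by
  rw [Finset.Nat.sum_antidiagonal_eq_sum_range_succ fun i j => x ^ i * y ^ j]
  exact (Commute.all x y).geom_sum₂_mul (n + 1)

theorem aeval_add_mul_eq_pow_add_pow {k A : Type*} [CommSemiring k] [CommSemiring A] [Algebra k A]
    {m : ℕ} {g : MvPolynomial (Fin 2) k}
    (hg : aeval ![(X 0 : MvPolynomial (Fin 2) k) + X 1, X 0 * X 1] g = X 0 ^ m + X 1 ^ m)
    (p q : A) : aeval ![p + q, p * q] g = p ^ m + q ^ m := by
  have specialize_vars : (aeval ![p, q]).comp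
      (aeval ![(X 0 : MvPolynomial (Fin 2) k) + X 1, X 0 * X 1]) = aeval ![p + q, p * q] := by
    ext i
    fin_cases i <;> simp
  rw [← specialize_vars, AlgHom.comp_apply, hg]
  simp

theorem isLeftRegular_X_sub_X {σ R : Type*} [CommRing R] [IsDomain R] {i j : σ} (hij : i ≠ j) :
    IsLeftRegular (X i - X j : MvPolynomial σ R) :=
  (IsRegular.of_ne_zero (sub_ne_zero.mpr (X_injective.ne hij))).left

section MatrixFactorization

variable {A : Type*} [CommRing A] {x₁ x₂ x₃ x₄ π₁₃ π₂₄ u₁ u₂ a₁ : A}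

theorem potential_eq_of_difference_quotients {k : Type*} [CommSemiring k] [Algebra k A] {n : ℕ}
    {g : MvPolynomial (Fin 2) k}
    (hg : aeval ![(X 0 : MvPolynomial (Fin 2) k) + X 1, X 0 * X 1] g
        = X 0 ^ (n + 1) + X 1 ^ (n + 1))
    (h₁₃ : π₁₃ = ∑ p ∈ Finset.HasAntidiagonal.antidiagonal n, x₁ ^ p.1 * x₃ ^ p.2)
    (h₂₄ : π₂₄ = ∑ p ∈ Finset.HasAntidiagonal.antidiagonal n, x₂ ^ p.1 * x₄ ^ p.2)
    (hu₁ : u₁ * (x₁ + x₂ - x₃ - x₄)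
        = aeval ![x₁ + x₂, x₁ * x₂] g - aeval ![x₃ + x₄, x₁ * x₂] g)
    (hu₂ : u₂ * (x₁ * x₂ - x₃ * x₄)
        = aeval ![x₃ + x₄, x₁ * x₂] g - aeval ![x₃ + x₄, x₃ * x₄] g) :
    π₁₃ * (x₁ - x₃) + π₂₄ * (x₂ - x₄)
      = u₁ * (x₁ + x₂ - x₃ - x₄) + u₂ * (x₁ * x₂ - x₃ * x₄) :=
  calc π₁₃ * (x₁ - x₃) + π₂₄ * (x₂ - x₄)
    _ = (x₁ ^ (n + 1) - x₃ ^ (n + 1)) + (x₂ ^ (n + 1) - x₄ ^ (n + 1)) := by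
      simp only [h₁₃, h₂₄, sum_antidiagonal_pow_mul_pow_mul_sub]
    _ = (x₁ ^ (n + 1) + x₂ ^ (n + 1)) - (x₃ ^ (n + 1) + x₄ ^ (n + 1)) := by ring
    _ = aeval ![x₁ + x₂, x₁ * x₂] g - aeval ![x₃ + x₄, x₃ * x₄] g := by
      simp only [aeval_add_mul_eq_pow_add_pow hg]
    _ = u₁ * (x₁ + x₂ - x₃ - x₄) + u₂ * (x₁ * x₂ - x₃ * x₄) := by
      rw [hu₁, hu₂, sub_add_sub_cancel]

theorem pi₂₄_eq_linear_form (ha₁ : (x₁ - x₃) * (a₁ + u₂) = u₁ + x₁ * u₂ - π₂₄) :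
    π₂₄ = u₁ + x₃ * u₂ - (x₁ - x₃) * a₁ := by
  linear_combination ha₁

theorem pi₁₃_eq_linear_form (hx : IsLeftRegular (x₁ - x₃))
    (potential_eq : π₁₃ * (x₁ - x₃) + π₂₄ * (x₂ - x₄)
      = u₁ * (x₁ + x₂ - x₃ - x₄) + u₂ * (x₁ * x₂ - x₃ * x₄))
    (ha₁ : (x₁ - x₃) * (a₁ + u₂) = u₁ + x₁ * u₂ - π₂₄) :
    π₁₃ = u₁ + x₂ * u₂ + (x₂ - x₄) * a₁ := by
  apply hx
  linear_combination potential_eq - (x₂ - x₄) * ha₁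

theorem chi0_comm_zero (h₁₃ : π₁₃ = u₁ + x₂ * u₂ + (x₂ - x₄) * a₁)
    (h₂₄ : π₂₄ = u₁ + x₃ * u₂ - (x₁ - x₃) * a₁) :
    !![x₃, -x₂; -1, 1] * !![π₁₃, x₂ - x₄; π₂₄, -x₁ + x₃]
      = !![u₁, x₁ * x₂ - x₃ * x₄; u₂, -x₁ - x₂ + x₃ + x₄] * !![x₃ - x₂, 0; a₁, 1] := by
  rw [h₁₃, h₂₄, Matrix.mul_fin_two, Matrix.mul_fin_two]
  ring_nf

theorem chi0_comm_one (h₁₃ : π₁₃ = u₁ + x₂ * u₂ + (x₂ - x₄) * a₁)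
    (h₂₄ : π₂₄ = u₁ + x₃ * u₂ - (x₁ - x₃) * a₁) :
    !![x₃ - x₂, 0; a₁, 1] * !![x₁ - x₃, x₂ - x₄; π₂₄, -π₁₃]
      = !![x₁ + x₂ - x₃ - x₄, x₁ * x₂ - x₃ * x₄; u₂, -u₁] * !![x₃, -x₂; -1, 1] := by
  rw [h₁₃, h₂₄, Matrix.mul_fin_two, Matrix.mul_fin_two]
  ring_nf

theorem chi0_hom_of_matrix_factorizations_general {k : Type*} [CommSemiring k] [Algebra k A]
    {n : ℕ} {g : MvPolynomial (Fin 2) k}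
    (hg : aeval ![(X 0 : MvPolynomial (Fin 2) k) + X 1, X 0 * X 1] g
        = X 0 ^ (n + 1) + X 1 ^ (n + 1))
    (hx : IsLeftRegular (x₁ - x₃))
    (h₁₃ : π₁₃ = ∑ p ∈ Finset.HasAntidiagonal.antidiagonal n, x₁ ^ p.1 * x₃ ^ p.2)
    (h₂₄ : π₂₄ = ∑ p ∈ Finset.HasAntidiagonal.antidiagonal n, x₂ ^ p.1 * x₄ ^ p.2)
    (hu₁ : u₁ * (x₁ + x₂ - x₃ - x₄)
        = aeval ![x₁ + x₂, x₁ * x₂] g - aeval ![x₃ + x₄, x₁ * x₂] g)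
    (hu₂ : u₂ * (x₁ * x₂ - x₃ * x₄)
        = aeval ![x₃ + x₄, x₁ * x₂] g - aeval ![x₃ + x₄, x₃ * x₄] g)
    (ha₁ : (x₁ - x₃) * (a₁ + u₂) = u₁ + x₁ * u₂ - π₂₄) :
    !![x₃, -x₂; -1, 1] * !![π₁₃, x₂ - x₄; π₂₄, -x₁ + x₃]
        = !![u₁, x₁ * x₂ - x₃ * x₄; u₂, -x₁ - x₂ + x₃ + x₄] * !![x₃ - x₂, 0; a₁, 1]
      ∧ !![x₃ - x₂, 0; a₁, 1] * !![x₁ - x₃, x₂ - x₄; π₂₄, -π₁₃]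
        = !![x₁ + x₂ - x₃ - x₄, x₁ * x₂ - x₃ * x₄; u₂, -u₁] * !![x₃, -x₂; -1, 1] := by
  have potential_eq := potential_eq_of_difference_quotients hg h₁₃ h₂₄ hu₁ hu₂
  have pi₁₃_eq := pi₁₃_eq_linear_form hx potential_eq ha₁
  have pi₂₄_eq := pi₂₄_eq_linear_form ha₁
  exact ⟨chi0_comm_zero pi₁₃_eq pi₂₄_eq, chi0_comm_one pi₁₃_eq pi₂₄_eq⟩

end MatrixFactorization

theorem chi0_hom_of_matrix_factorizations (n : ℕ) (hn : 2 ≤ n)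
    (g : MvPolynomial (Fin 2) ℚ)
    (hg : aeval ![(X 0 : MvPolynomial (Fin 2) ℚ) + X 1, X 0 * X 1] g
        = (X 0 : MvPolynomial (Fin 2) ℚ) ^ (n + 1) + X 1 ^ (n + 1))
    (π₁₃ π₂₄ : MvPolynomial (Fin 4) ℚ)
    (h₁₃ : π₁₃ = ∑ p ∈ Finset.HasAntidiagonal.antidiagonal n, X 0 ^ p.1 * X 2 ^ p.2)
    (h₂₄ : π₂₄ = ∑ p ∈ Finset.HasAntidiagonal.antidiagonal n, X 1 ^ p.1 * X 3 ^ p.2)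
    (u₁ u₂ : MvPolynomial (Fin 4) ℚ)
    (hu₁ : u₁ * (X 0 + X 1 - X 2 - X 3)
        = aeval ![(X 0 : MvPolynomial (Fin 4) ℚ) + X 1, X 0 * X 1] g
          - aeval ![(X 2 : MvPolynomial (Fin 4) ℚ) + X 3, X 0 * X 1] g)
    (hu₂ : u₂ * (X 0 * X 1 - X 2 * X 3)
        = aeval ![(X 2 : MvPolynomial (Fin 4) ℚ) + X 3, X 0 * X 1] g
          - aeval ![(X 2 : MvPolynomial (Fin 4) ℚ) + X 3, X 2 * X 3] g)
    (a₁ : MvPolynomial (Fin 4) ℚ)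
    (ha₁ : (X 0 - X 2) * (a₁ + u₂) = u₁ + X 0 * u₂ - π₂₄)
    (P₀ P₁ Q₀ Q₁ U₀ U₁ : Matrix (Fin 2) (Fin 2) (MvPolynomial (Fin 4) ℚ))
    (hP₀ : P₀ = !![π₁₃, X 1 - X 3; π₂₄, -X 0 + X 2])
    (hP₁ : P₁ = !![X 0 - X 2, X 1 - X 3; π₂₄, -π₁₃])
    (hQ₀ : Q₀ = !![u₁, X 0 * X 1 - X 2 * X 3; u₂, -X 0 - X 1 + X 2 + X 3])
    (hQ₁ : Q₁ = !![X 0 + X 1 - X 2 - X 3, X 0 * X 1 - X 2 * X 3; u₂, -u₁])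
    (hU₀ : U₀ = !![X 2 - X 1, 0; a₁, 1])
    (hU₁ : U₁ = !![X 2, -X 1; -1, 1]) :
    U₁ * P₀ = Q₀ * U₀ ∧ U₀ * P₁ = Q₁ * U₁ := by
  subst hP₀ hP₁ hQ₀ hQ₁ hU₀ hU₁
  exact chi0_hom_of_matrix_factorizations_general hg (isLeftRegular_X_sub_X (by decide))
    h₁₃ h₂₄ hu₁ hu₂ ha₁
end

section
/- Fix an integer n ≥ 2 and let g ∈ ℚ[s, e] be the unique two-variable polynomial with g(X + Y, X·Y) = X^{n+1} + Y^{n+1}. In R = ℚ[x₁, x₂, x₃, x₄], set π₁₃ = Σ_{a+b=n, a,b≥0} x₁^a x₃^b and π₂₄ = Σ_{a+b=n, a,b≥0} x₂^a x₄^b, let u₁, u₂ ∈ R satisfy u₁·(x₁ + x₂ − x₃ − x₄) = g(x₁ + x₂, x₁x₂) − g(x₃ + x₄, x₁x₂) and u₂·(x₁x₂ − x₃x₄) = g(x₃ + x₄, x₁x₂) − g(x₃ + x₄, x₃x₄), and let a₁ ∈ R satisfy (x₁ − x₃)·(a₁ + u₂) = u₁ + x₁u₂ − π₂₄. Define P₀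 = [[π₁₃, x₂ − x₄], [π₂₄, −x₁ + x₃]], P₁ = [[x₁ − x₃, x₂ − x₄], [π₂₄, −π₁₃]], Q₀ = [[u₁, x₁x₂ − x₃x₄], [u₂, −x₁ − x₂ + x₃ + x₄]], Q₁ = [[x₁ + x₂ − x₃ − x₄, x₁x₂ − x₃x₄], [u₂, −u₁]], V₀ = [[1, 0], [−a₁, x₃ − x₂]], and V₁ = [[1, x₂], [1, x₃]]. Then V₁·Q₀ = P₀·V₀ and V₀·Q₁ = P₁·V₁; i.e., the pair (V₀, V₁) is a homomorphism of matrix factorizations from (Q₀, Q₁) to (P₀, P₁). -/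
open MvPolynomial

/-!
Both `(P₀, P₁)` and `(Q₀, Q₁)` come from factorizations of the potential
`S = x₁ ^ (n + 1) + x₂ ^ (n + 1) - x₃ ^ (n + 1) - x₄ ^ (n + 1)`: by geometric sums
`S = (x₁ - x₃) * π₁₃ + (x₂ - x₄) * π₂₄`, and by telescoping through `g (x₃ + x₄, x₁ * x₂)` also
`S = u₁ * (x₁ + x₂ - x₃ - x₄) + u₂ * (x₁ * x₂ - x₃ * x₄)`. The equation for `a₁` expresses `π₂₄`
in terms of `u₁`, `u₂`, `a₁`. Comparing the two factorizations and cancelling `x₁ - x₃` does the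
same for `π₁₃`, and after substitution both matrix equations hold entrywise.
-/

theorem aeval_add_mul_eq_aeval_aeval {k A : Type*} [CommSemiring k] [CommSemiring A] [Algebra k A]
    (g : MvPolynomial (Fin 2) k) (p q : A) :
    aeval ![p + q, p * q] g
      = aeval ![p, q] (aeval ![(X 0 : MvPolynomial (Fin 2) k) + X 1, X 0 * X 1] g) := by
  rw [← AlgHom.comp_apply, comp_aeval]
  congr 2
  ext i
  fin_cases i <;> simp

section CommRing

variable {A : Type*} [CommRing A]

theorem sub_mul_sum_antidiagonal_pow_mul_pow (n : ℕ) (p q : A) :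
    (p - q) * ∑ i ∈ Finset.HasAntidiagonal.antidiagonal n, p ^ i.1 * q ^ i.2
      = p ^ (n + 1) - q ^ (n + 1) := by
  rw [Finset.Nat.sum_antidiagonal_eq_sum_range_succ (fun a b ↦ p ^ a * q ^ b)]
  exact (Commute.all p q).mul_geom_sum₂ (n + 1)

variable {x₁ x₂ x₃ x₄ π₁₃ π₂₄ u₁ u₂ a₁ : A}

theorem chi1_hom_of_potential_eq (hreg : IsLeftRegular (x₁ - x₃))
    (hpotential : (x₁ - x₃) * π₁₃ + (x₂ - x₄) * π₂₄
      = u₁ * (x₁ + x₂ - x₃ - x₄) + u₂ * (x₁ * x₂ - x₃ * x₄))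
    (ha₁ : (x₁ - x₃) * (a₁ + u₂) = u₁ + x₁ * u₂ - π₂₄) :
    !![1, x₂; 1, x₃] * !![u₁, x₁ * x₂ - x₃ * x₄; u₂, -x₁ - x₂ + x₃ + x₄]
        = !![π₁₃, x₂ - x₄; π₂₄, -x₁ + x₃] * !![1, 0; -a₁, x₃ - x₂] ∧
      !![1, 0; -a₁, x₃ - x₂] * !![x₁ + x₂ - x₃ - x₄, x₁ * x₂ - x₃ * x₄; u₂, -u₁]
        = !![x₁ - x₃, x₂ - x₄; π₂₄, -π₁₃] * !![1, x₂; 1, x₃] := by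
  have hπ₂₄ : π₂₄ = u₁ + x₃ * u₂ - (x₁ - x₃) * a₁ := by linear_combination ha₁
  have hπ₁₃ : π₁₃ = u₁ + x₂ * u₂ + (x₂ - x₄) * a₁ :=
    hreg (by linear_combination hpotential - (x₂ - x₄) * hπ₂₄)
  simp only [Matrix.mul_fin_two, hπ₁₃, hπ₂₄]
  constructor <;> congrm !![?_, ?_; ?_, ?_] <;> ring

theorem chi1_hom_of_matrix_factorizations_general {k : Type*} [CommSemiring k]
    [Algebra k A] {n : ℕ} {g : MvPolynomial (Fin 2) k}
    (hg : aeval ![(X 0 : MvPolynomial (Fin 2) k) + X 1, X 0 * X 1] g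
      = (X 0 : MvPolynomial (Fin 2) k) ^ (n + 1) + X 1 ^ (n + 1))
    (hreg : IsLeftRegular (x₁ - x₃))
    (h₁₃ : π₁₃ = ∑ p ∈ Finset.HasAntidiagonal.antidiagonal n, x₁ ^ p.1 * x₃ ^ p.2)
    (h₂₄ : π₂₄ = ∑ p ∈ Finset.HasAntidiagonal.antidiagonal n, x₂ ^ p.1 * x₄ ^ p.2)
    (hu₁ : u₁ * (x₁ + x₂ - x₃ - x₄)
      = aeval ![x₁ + x₂, x₁ * x₂] g - aeval ![x₃ + x₄, x₁ * x₂] g)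
    (hu₂ : u₂ * (x₁ * x₂ - x₃ * x₄)
      = aeval ![x₃ + x₄, x₁ * x₂] g - aeval ![x₃ + x₄, x₃ * x₄] g)
    (ha₁ : (x₁ - x₃) * (a₁ + u₂) = u₁ + x₁ * u₂ - π₂₄) :
    !![1, x₂; 1, x₃] * !![u₁, x₁ * x₂ - x₃ * x₄; u₂, -x₁ - x₂ + x₃ + x₄]
        = !![π₁₃, x₂ - x₄; π₂₄, -x₁ + x₃] * !![1, 0; -a₁, x₃ - x₂] ∧
      !![1, 0; -a₁, x₃ - x₂] * !![x₁ + x₂ - x₃ - x₄, x₁ * x₂ - x₃ * x₄; u₂, -u₁]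
        = !![x₁ - x₃, x₂ - x₄; π₂₄, -π₁₃] * !![1, x₂; 1, x₃] := by
  have aeval_g (p q : A) : aeval ![p + q, p * q] g = p ^ (n + 1) + q ^ (n + 1) := by
    rw [aeval_add_mul_eq_aeval_aeval, hg]
    simp
  refine chi1_hom_of_potential_eq hreg ?_ ha₁
  calc (x₁ - x₃) * π₁₃ + (x₂ - x₄) * π₂₄
      = (x₁ ^ (n + 1) - x₃ ^ (n + 1)) + (x₂ ^ (n + 1) - x₄ ^ (n + 1)) := by
        rw [h₁₃, h₂₄, sub_mul_sum_antidiagonal_pow_mul_pow, sub_mul_sum_antidiagonal_pow_mul_pow]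
    _ = aeval ![x₁ + x₂, x₁ * x₂] g - aeval ![x₃ + x₄, x₃ * x₄] g := by
        rw [aeval_g, aeval_g]
        ring
    _ = u₁ * (x₁ + x₂ - x₃ - x₄) + u₂ * (x₁ * x₂ - x₃ * x₄) := by
        rw [hu₁, hu₂, sub_add_sub_cancel]

end CommRing

theorem chi1_hom_of_matrix_factorizations (n : ℕ) (hn : 2 ≤ n)
    (g : MvPolynomial (Fin 2) ℚ)
    (hg : aeval ![(X 0 : MvPolynomial (Fin 2) ℚ) + X 1, X 0 * X 1] g
        = (X 0 : MvPolynomial (Fin 2) ℚ) ^ (n + 1) + X 1 ^ (n + 1))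
    (π₁₃ π₂₄ : MvPolynomial (Fin 4) ℚ)
    (h₁₃ : π₁₃ = ∑ p ∈ Finset.HasAntidiagonal.antidiagonal n, X 0 ^ p.1 * X 2 ^ p.2)
    (h₂₄ : π₂₄ = ∑ p ∈ Finset.HasAntidiagonal.antidiagonal n, X 1 ^ p.1 * X 3 ^ p.2)
    (u₁ u₂ : MvPolynomial (Fin 4) ℚ)
    (hu₁ : u₁ * (X 0 + X 1 - X 2 - X 3)
        = aeval ![(X 0 : MvPolynomial (Fin 4) ℚ) + X 1, X 0 * X 1] g
          - aeval ![(X 2 : MvPolynomial (Fin 4) ℚ) + X 3, X 0 * X 1] g)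
    (hu₂ : u₂ * (X 0 * X 1 - X 2 * X 3)
        = aeval ![(X 2 : MvPolynomial (Fin 4) ℚ) + X 3, X 0 * X 1] g
          - aeval ![(X 2 : MvPolynomial (Fin 4) ℚ) + X 3, X 2 * X 3] g)
    (a₁ : MvPolynomial (Fin 4) ℚ)
    (ha₁ : (X 0 - X 2) * (a₁ + u₂) = u₁ + X 0 * u₂ - π₂₄)
    (P₀ P₁ Q₀ Q₁ V₀ V₁ : Matrix (Fin 2) (Fin 2) (MvPolynomial (Fin 4) ℚ))
    (hP₀ : P₀ = !![π₁₃, X 1 - X 3; π₂₄, -X 0 + X 2])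
    (hP₁ : P₁ = !![X 0 - X 2, X 1 - X 3; π₂₄, -π₁₃])
    (hQ₀ : Q₀ = !![u₁, X 0 * X 1 - X 2 * X 3; u₂, -X 0 - X 1 + X 2 + X 3])
    (hQ₁ : Q₁ = !![X 0 + X 1 - X 2 - X 3, X 0 * X 1 - X 2 * X 3; u₂, -u₁])
    (hV₀ : V₀ = !![1, 0; -a₁, X 2 - X 1])
    (hV₁ : V₁ = !![1, X 1; 1, X 2]) :
    V₁ * Q₀ = P₀ * V₀ ∧ V₀ * Q₁ = P₁ * V₁ := by
  subst hP₀ hP₁ hQ₀ hQ₁ hV₀ hV₁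
  have hreg : IsLeftRegular (X 0 - X 2 : MvPolynomial (Fin 4) ℚ) :=
    (IsRegular.of_ne_zero (sub_ne_zero.2 (X_injective.ne (by decide)))).left
  exact chi1_hom_of_matrix_factorizations_general hg hreg h₁₃ h₂₄ hu₁ hu₂ ha₁
end
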